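/- Uniqueness of the Lyapunov solution: let A be a real n×n Hurwitz matrix and Q a real n×n matrix. If P₁ and P₂ are real n×n matrices with P₁A + AᵀP₁ + Q = 0 and P₂A + AᵀP₂ + Q = 0, then P₁ = P₂. -/

import Mathlib

open Matrix

/-!
Two solutions differ by a matrix `X` with `X * A = -Aᵀ * X`. Such an intertwining relation passes to
polynomials, `X * p(A) = p(-Aᵀ) * X`, so by Cayley–Hamilton and Bézout it forces `X = 0` once the
characteristic polynomials of `A` and `-Aᵀ` are coprime. The common roots of these polynomials are
the eigenvalues `μ` of `A` for which `-μ` is also an eigenvalue, and a Hurwitz matrix has none.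
-/

section Intertwining

open Polynomial

variable {m n R : Type*} [Fintype m] [DecidableEq m] [Fintype n] [DecidableEq n]

lemma mul_pow_eq_pow_mul_of_mul_eq_mul [Semiring R] {X : Matrix m n R} {B : Matrix n n R}
    {C : Matrix m m R} (h : X * B = C * X) (k : ℕ) : X * B ^ k = C ^ k * X := by
  induction k with
  | zero => simp
  | succ k ih =>
    rw [pow_succ, pow_succ, ← Matrix.mul_assoc, ih, Matrix.mul_assoc, h, Matrix.mul_assoc]

lemma mul_aeval_eq_aeval_mul_of_mul_eq_mul [CommSemiring R] {X : Matrix m n R} {B : Matrix n n R}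
    {C : Matrix m m R} (h : X * B = C * X) (p : R[X]) : X * aeval B p = aeval C p * X := by
  induction p using Polynomial.induction_on' with
  | add p q hp hq => simp only [map_add, Matrix.mul_add, Matrix.add_mul, hp, hq]
  | monomial k a =>
    simp only [aeval_monomial, ← Algebra.smul_def, Matrix.mul_smul, Matrix.smul_mul,
      mul_pow_eq_pow_mul_of_mul_eq_mul h]

lemma eq_zero_of_mul_eq_mul_of_isCoprime_charpoly [CommRing R] {X : Matrix m n R}
    {B : Matrix n n R} {C : Matrix m m R} (hBC : IsCoprime B.charpoly C.charpoly)
    (h : X * B = C * X) : X = 0 := by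
  obtain ⟨u, v, huv⟩ := hBC
  have aeval_B : aeval B (v * C.charpoly) = 1 := by
    simpa [B.aeval_self_charpoly] using congrArg (aeval B) huv
  calc
    X = X * aeval B (v * C.charpoly) := by rw [aeval_B, Matrix.mul_one]
    _ = aeval C (v * C.charpoly) * X := mul_aeval_eq_aeval_mul_of_mul_eq_mul h _
    _ = 0 := by rw [map_mul, C.aeval_self_charpoly, mul_zero, Matrix.zero_mul]

end Intertwining

section Spectrum

variable {m n R K : Type*} [Fintype m] [DecidableEq m] [Fintype n] [DecidableEq n]

lemma spectrum_transpose [CommRing R] (A : Matrix n n R) : spectrum R Aᵀ = spectrum R A := by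
  ext μ
  simp only [mem_spectrum_iff_not_isUnit_eval_charpoly, charpoly_transpose]

lemma isCoprime_charpoly_iff_disjoint_spectrum_map [Field K] (L : Type*) [Field L] [IsAlgClosed L]
    [Algebra K L] (B : Matrix n n K) (C : Matrix m m K) :
    IsCoprime B.charpoly C.charpoly ↔
      Disjoint (spectrum L (B.map (algebraMap K L))) (spectrum L (C.map (algebraMap K L))) := by
  simp only [Polynomial.isCoprime_iff_aeval_ne_zero_of_isAlgClosed K L, Set.disjoint_left,
    mem_spectrum_iff_isRoot_charpoly, charpoly_map, Polynomial.IsRoot.def,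
    Polynomial.eval_map_algebraMap, ne_eq, imp_iff_not_or]

end Spectrum

theorem lyapunov_solution_unique_general {n K L : Type*} [Fintype n] [DecidableEq n] [Field K]
    [Field L] [IsAlgClosed L] [Algebra K L] {A Q P₁ P₂ : Matrix n n K}
    (hA : ∀ μ ∈ spectrum L (A.map (algebraMap K L)), ∀ ν ∈ spectrum L (A.map (algebraMap K L)),
      μ + ν ≠ 0)
    (h₁ : P₁ * A + Aᵀ * P₁ + Q = 0) (h₂ : P₂ * A + Aᵀ * P₂ + Q = 0) : P₁ = P₂ := by
  have coprime : IsCoprime A.charpoly (-Aᵀ).charpoly := by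
    rw [isCoprime_charpoly_iff_disjoint_spectrum_map L, Set.disjoint_left]
    intro μ hμ hμ_neg
    have neg_mem : -μ ∈ spectrum L (A.map (algebraMap K L)) := by
      rwa [Matrix.map_neg _ (map_neg _), ← spectrum.neg_eq, Set.mem_neg, transpose_map,
        spectrum_transpose] at hμ_neg
    exact hA μ hμ (-μ) neg_mem (add_neg_cancel μ)
  have intertwine : (P₁ - P₂) * A = -Aᵀ * (P₁ - P₂) := by
    rw [← sub_eq_zero]
    calc
      (P₁ - P₂) * A - -Aᵀ * (P₁ - P₂)
        = (P₁ * A + Aᵀ * P₁ + Q) - (P₂ * A + Aᵀ * P₂ + Q) := by noncomm_ring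
      _ = 0 := by rw [h₁, h₂, sub_zero]
  exact sub_eq_zero.mp (eq_zero_of_mul_eq_mul_of_isCoprime_charpoly coprime intertwine)

/-- Uniqueness of the Lyapunov solution: if `A` is Hurwitz (all complex eigenvalues have
strictly negative real part) and both `P₁` and `P₂` solve `P A + Aᵀ P + Q = 0`,
then `P₁ = P₂`. -/
theorem lyapunov_solution_unique (n : ℕ) (A Q P₁ P₂ : Matrix (Fin n) (Fin n) ℝ)
    (hA : ∀ μ ∈ spectrum ℂ (A.map (Complex.ofReal ·)), μ.re < 0)
    (h₁ : P₁ * A + Aᵀ * P₁ + Q = 0) (h₂ : P₂ * A + Aᵀ * P₂ + Q = 0) :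
    P₁ = P₂ :=
  lyapunov_solution_unique_general (L := ℂ)
    (fun μ hμ ν hν h ↦ (add_neg (hA μ hμ) (hA ν hν)).ne (congrArg Complex.re h)) h₁ h₂
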